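/- arXiv:2202.00084 — 11 statements merged into one kernel-verified Lean document; each statement's English description precedes it below -/
import Mathlib

section
/- Let X be a regular band (z*x*z*y*z = z*x*y*z for all x, y, z) and let x, y ∈ X. (a) If x*y = y*x then x*y is the greatest lower bound of x and y with respect to the natural partial order ≤: x*y ≤ x, x*y ≤ y, and every z with z ≤ x and z ≤ y satisfies z ≤ x*y. (b) Conversely, if there exists z ∈ X with z ≤ x, z ≤ y and z D x*y, then x*y = z = y*x. -/
/-- The natural partial order on a band: `x ≤ y` iff `x = x*y` and `x = y*x`. -/
def bandLe {X : Type*} [Mul X] (x y : X) : Prop := x = x * y ∧ x = y * x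

/-- Green's `D`-relation on a band. -/
def bandD {X : Type*} [Mul X] (x y : X) : Prop := x = x * y * x ∧ y = y * x * y

/-- In a regular band: (a) if `x` and `y` commute then `x*y` is
the greatest lower bound of `x` and `y` for the natural partial order;
(b) conversely, if some `z ≤ x`, `z ≤ y` is `D`-related to `x*y` then
`x*y = z = y*x`. -/
theorem regular_band_commuting_meet {X : Type*} [Semigroup X]
    (idem : ∀ x : X, x * x = x)
    (reg : ∀ x y z : X, z * x * z * y * z = z * x * y * z) :
    ∀ x y : X,
      (x * y = y * x →
        bandLe (x * y) x ∧ bandLe (x * y) y ∧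
        ∀ z : X, bandLe z x → bandLe z y → bandLe z (x * y)) ∧
      (∀ z : X, bandLe z x → bandLe z y → bandD z (x * y) → x * y = z ∧ z = y * x) := by
  intro x y
  refine ⟨fun h => ⟨⟨?_, ?_⟩, ⟨?_, ?_⟩, ?_⟩, ?_⟩
  · rw [h, mul_assoc, idem]
  · rw [← mul_assoc, idem]
  · rw [mul_assoc, idem]
  · rw [h, ← mul_assoc, idem]
  · rintro z ⟨h1, h2⟩ ⟨h3, h4⟩
    refine ⟨?_, ?_⟩
    · rw [← mul_assoc, ← h1, ← h3]
    · rw [mul_assoc, ← h4, ← h2]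
  · rintro z ⟨h1, h2⟩ ⟨h3, h4⟩ ⟨_, h6⟩
    have hxy : x * y = z := by
      calc x * y = x * y * z * (x * y) := h6
        _ = z * (x * y) := by rw [mul_assoc x y z, ← h4, ← h2]
        _ = z := by rw [← mul_assoc, ← h1, ← h3]
    refine ⟨hxy, ?_⟩
    calc z = z * x := h1
      _ = y * z * x := by rw [← h4]
      _ = y * (x * y) * x := by rw [hxy]
      _ = (y * x) * (y * x) := by simp only [mul_assoc]
      _ = y * x := idem _
end

section
/- Let Y be a right regular band and F a presheaf of sets on the poset (Y, ≤) given by the natural partial order, i.e. a functor (Y, ≤)^op → Set, with restriction maps written t ↦ t|_x for x ≤ y and t ∈ F(y). Note that x*y ≤ y for all x, y by right regularity. On the set E = {(y, t) : y ∈ Y, t ∈ F(y)} define (x, s)*(y, t) = (x*y, t|_{x*y}). Then: (a) this operation is associative and idempotent and makes E a right regular band; (b) the first projection E → Y, (y, t) ↦ y, is a band homomorphism; (c) (x, s) D (y, t) in E if and only if x D y in Y; in particular the induced map E/D → Y/D is injective, and its image is a downward-closed subset of Y/D (consisting of the classes [y] with F(y) nonempty). -/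
/-- The preorder `x ≼ y` iff `x = x*y*x` on a band. -/
def bandPreceq {X : Type*} [Mul X] (x y : X) : Prop := x = x * y * x

/-- A presheaf of sets on the poset underlying a band (with its natural
partial order `bandLe`): a family of sets with contravariant functorial
restriction maps. -/
structure BandPresheaf (Y : Type*) [Mul Y] where
  obj : Y → Type*
  res : ∀ {x y : Y}, bandLe x y → obj y → obj x
  res_refl : ∀ {x : Y} (h : bandLe x x) (t : obj x), res h t = t
  res_comp : ∀ {x y z : Y} (hxy : bandLe x y) (hyz : bandLe y z) (hxz : bandLe x z)
      (t : obj z), res hxy (res hyz t) = res hxz t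

/-- In a right regular band, `x*y ≤ y`. -/
lemma mul_bandLe_right {Y : Type*} [Semigroup Y] (idem : ∀ x : Y, x * x = x)
    (rreg : ∀ x y : Y, x * y * x = y * x) (x y : Y) : bandLe (x * y) y := by
  constructor
  · rw [mul_assoc, idem]
  · rw [← mul_assoc, rreg]

/-- The multiplication `(x, s)*(y, t) = (x*y, t|_{x*y})` on the set of elements
of a presheaf on a right regular band. -/
def elMul {Y : Type*} [Semigroup Y] (idem : ∀ x : Y, x * x = x)
    (rreg : ∀ x y : Y, x * y * x = y * x) (F : BandPresheaf Y)
    (a b : (y : Y) × F.obj y) : (y : Y) × F.obj y :=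
  ⟨a.1 * b.1, F.res (mul_bandLe_right idem rreg a.1 b.1) b.2⟩

lemma sigma_res_congr {Y : Type*} [Mul Y] (F : BandPresheaf Y) {z z' y : Y}
    (h : bandLe z y) (h' : bandLe z' y) (t : F.obj y) (e : z = z') :
    (⟨z, F.res h t⟩ : (y : Y) × F.obj y) = ⟨z', F.res h' t⟩ := by
  subst e
  rfl

lemma sigma_res_self {Y : Type*} [Mul Y] (F : BandPresheaf Y) {z y : Y}
    (h : bandLe z y) (t : F.obj y) (e : z = y) :
    (⟨z, F.res h t⟩ : (y : Y) × F.obj y) = ⟨y, t⟩ := by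
  subst e
  rw [F.res_refl]

/-- Let `Y` be a right regular band and `F` a presheaf of sets on
`(Y, ≤)`. Then on `E = Σ y, F y` the operation `(x,s)*(y,t) = (x*y, t|_{x*y})` is
(a) associative, idempotent and right regular; (b) the first projection is
multiplicative (a band homomorphism); (c) `(x,s) D (y,t)` in `E` iff `x D y` in
`Y` (in particular `E/D → Y/D` is injective), and the image consists of the
classes with `F` nonempty, which form a downward-closed subset of `Y/D`. -/
theorem elements_band_of_presheaf {Y : Type*} [Semigroup Y]
    (idem : ∀ x : Y, x * x = x) (rreg : ∀ x y : Y, x * y * x = y * x)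
    (F : BandPresheaf Y) :
    (∀ a b c : (y : Y) × F.obj y,
      elMul idem rreg F (elMul idem rreg F a b) c =
        elMul idem rreg F a (elMul idem rreg F b c)) ∧
    (∀ a : (y : Y) × F.obj y, elMul idem rreg F a a = a) ∧
    (∀ a b : (y : Y) × F.obj y,
      elMul idem rreg F (elMul idem rreg F a b) a = elMul idem rreg F b a) ∧
    (∀ a b : (y : Y) × F.obj y, (elMul idem rreg F a b).1 = a.1 * b.1) ∧
    (∀ a b : (y : Y) × F.obj y,
      (a = elMul idem rreg F (elMul idem rreg F a b) a ∧
       b = elMul idem rreg F (elMul idem rreg F b a) b) ↔ bandD a.1 b.1) ∧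
    (∀ x y : Y, bandPreceq x y → Nonempty (F.obj y) →
      ∃ x' : Y, bandD x' x ∧ Nonempty (F.obj x')) := by
  refine ⟨?_, ?_, ?_, ?_, ?_, ?_⟩
  · rintro ⟨x, s⟩ ⟨y, t⟩ ⟨z, u⟩
    have h := mul_bandLe_right idem rreg x (y * z)
    have h2 := mul_bandLe_right idem rreg (x * y) z
    have h3 : bandLe (x * (y * z)) z := by rw [← mul_assoc]; exact h2
    have hyz := mul_bandLe_right idem rreg y z
    have key : (⟨x * y * z, F.res h2 u⟩ : (y : Y) × F.obj y) =
        ⟨x * (y * z), F.res h (F.res hyz u)⟩ := by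
      rw [F.res_comp h hyz h3]
      exact sigma_res_congr F _ _ _ (mul_assoc x y z)
    exact key
  · rintro ⟨x, s⟩
    exact sigma_res_self F _ _ (idem x)
  · rintro ⟨x, s⟩ ⟨y, t⟩
    exact sigma_res_congr F _ _ _ (rreg x y)
  · intro a b
    rfl
  · rintro ⟨x, s⟩ ⟨y, t⟩
    constructor
    · rintro ⟨h1, h2⟩
      exact ⟨congrArg Sigma.fst h1, congrArg Sigma.fst h2⟩
    · rintro ⟨h1, h2⟩
      exact ⟨(sigma_res_self F _ _ h1.symm).symm, (sigma_res_self F _ _ h2.symm).symm⟩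
  · rintro x y h ⟨t⟩
    have h : x = x * y * x := h
    refine ⟨x * y, ⟨?_, ?_⟩, ⟨F.res (mul_bandLe_right idem rreg x y) t⟩⟩
    · rw [← h, ← mul_assoc, idem]
    · rw [← mul_assoc, idem, ← h]
end

section
/- Let X be a regular band. Then X is normal (z*x*y*z = z*y*x*z for all x, y, z) if and only if for all x, y ∈ X with y ≼ x there exists a unique y' ∈ X with y' ≤ x and y' D y. (The latter condition says that the semilattice reflection X → X/D is a covering of posets.) -/
/-- A regular band is normal iff the semilattice reflection
`X → X/D` is a covering of posets: for all `x, y` with `y ≼ x` there is a unique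
`y' ≤ x` with `y' D y`. -/
theorem regular_band_normal_iff_covering {X : Type*} [Semigroup X]
    (idem : ∀ x : X, x * x = x)
    (reg : ∀ x y z : X, z * x * z * y * z = z * x * y * z) :
    (∀ x y z : X, z * x * y * z = z * y * x * z) ↔
    (∀ x y : X, bandPreceq y x → ∃! y' : X, bandLe y' x ∧ bandD y' y) := by
  have id2 : ∀ x w : X, x * (x * w) = x * w := fun x w => by rw [← mul_assoc, idem]
  constructor
  · intro nor x y hyx
    unfold bandPreceq at hyx
    refine ⟨x * y * x, ⟨⟨?_, ?_⟩, ?_, ?_⟩, ?_⟩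
    · simp only [mul_assoc, idem]
    · simp only [mul_assoc, id2]
    · calc x * y * x = x * (y * x * y) * x := by rw [← hyx]
        _ = x * ((y * x * y) * x * y) * x := by rw [← hyx, ← hyx]
        _ = x * y * x * y * (x * y * x) := by simp only [mul_assoc]
    · calc y = y * x * y := hyx
        _ = (y * x * y) * x * y := by rw [← hyx]; exact hyx
        _ = y * (x * y * x) * y := by simp only [mul_assoc]
    · rintro w ⟨⟨h1, h2⟩, h3, h4⟩
      have a : w = x * w * y * x := by
        calc w = x * w * x := by rw [← h2, ← h1]
          _ = x * (w * y * w) * x := by rw [← h3]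
          _ = x * (w * y) * w * x := by simp only [mul_assoc]
          _ = x * w * (w * y) * x := nor _ _ _
          _ = x * w * y * x := by simp only [mul_assoc, id2]
      have b : x * y * x = x * w * y * x := by
        calc x * y * x = x * (y * w * y) * x := by rw [← h4]
          _ = x * y * (w * y) * x := by simp only [mul_assoc]
          _ = x * (w * y) * y * x := nor _ _ _
          _ = x * w * y * x := by simp only [mul_assoc, id2]
      rw [b]; exact a
  · intro cov x y z
    have le : ∀ a b : X, bandLe (z * a * b * z) z := fun a b =>
      ⟨by simp only [mul_assoc, idem], by simp only [mul_assoc, id2]⟩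
    have key : ∀ a b : X, z * a * b * z = z * a * b * z * (z * b * a * z) * (z * a * b * z) := by
      intro a b
      symm
      calc z * a * b * z * (z * b * a * z) * (z * a * b * z)
          = z * (a * b) * z * (b * a * z * a * b) * z := by simp only [mul_assoc, id2]
        _ = z * (a * b) * (b * a * z * a * b) * z := reg _ _ _
        _ = z * (a * b * a) * z * (a * b) * z := by simp only [mul_assoc, id2]
        _ = z * (a * b * a) * (a * b) * z := reg _ _ _
        _ = z * ((a * b) * (a * b)) * z := by simp only [mul_assoc, id2]
        _ = z * a * b * z := by rw [idem]; simp only [mul_assoc]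
    have pre : bandPreceq (z * y * x * z) z := by
      unfold bandPreceq
      rw [← (le y x).1, idem]
    exact (cov z _ pre).unique ⟨le x y, key x y, key y x⟩
      ⟨le y x, by rw [idem, idem], by rw [idem, idem]⟩
end

section
/- Let f : X → Y be a homomorphism of regular bands which is a covering of the underlying posets: for every x ∈ X and every y' ∈ Y with y' ≤ f(x) there exists a unique x' ∈ X with x' ≤ x and f(x') = y'. If Y is normal then X is normal. -/
/-- If `f : X → Y` is a homomorphism of regular bands which is a
covering of the underlying posets and `Y` is normal, then `X` is normal. -/
theorem normal_of_covering {X Y : Type*} [Semigroup X] [Semigroup Y]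
    (idemX : ∀ x : X, x * x = x) (idemY : ∀ y : Y, y * y = y)
    (regX : ∀ x y z : X, z * x * z * y * z = z * x * y * z)
    (regY : ∀ x y z : Y, z * x * z * y * z = z * x * y * z)
    (f : X →ₙ* Y)
    (cov : ∀ (x : X) (y' : Y), bandLe y' (f x) → ∃! x' : X, bandLe x' x ∧ f x' = y')
    (normY : ∀ x y z : Y, z * x * y * z = z * y * x * z) :
    ∀ x y z : X, z * x * y * z = z * y * x * z := by
  intro x y z
  have le : ∀ a b : X, bandLe (z * a * b * z) z := by
    intro a b
    refine ⟨?_, ?_⟩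
    · rw [mul_assoc (z * a * b) z z, idemX]
    · rw [← mul_assoc, ← mul_assoc, ← mul_assoc, idemX]
  have hle : bandLe (f (z * x * y * z)) (f z) := by
    obtain ⟨h1, h2⟩ := le x y
    exact ⟨by rw [← map_mul, ← h1], by rw [← map_mul, ← h2]⟩
  refine (cov z _ hle).unique ⟨le x y, rfl⟩ ⟨le y x, ?_⟩
  simp only [map_mul]
  exact normY _ _ _
end

section
/- Let (S, ∧, ∨) be a normal skew lattice. Then the lattice reflection S/D is a distributive lattice — equivalently, for all x, y, z ∈ S one has z∧(x∨y)∧z D (z∧x∧z)∨(z∧y∧z) — if and only if the identity z∧(x∨y)∧z = (z∧x∧z)∨(z∧y∧z) holds for all x, y, z ∈ S. -/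
/-- Green's `D`-relation on a skew lattice, computed with the meet operation `m`:
`x D y` iff `x∧y∧x = x` and `y∧x∧y = y`. -/
def skewD {S : Type*} (m : S → S → S) (x y : S) : Prop :=
  m (m x y) x = x ∧ m (m y x) y = y

/-- A normal skew lattice has a distributive lattice reflection
(equivalently, `z∧(x∨y)∧z D (z∧x∧z)∨(z∧y∧z)` for all `x, y, z`) iff the identity
`z∧(x∨y)∧z = (z∧x∧z)∨(z∧y∧z)` holds. -/
theorem normal_skew_lattice_distributive_reflection {S : Type*} (m j : S → S → S)
    (m_assoc : ∀ x y z : S, m (m x y) z = m x (m y z))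
    (j_assoc : ∀ x y z : S, j (j x y) z = j x (j y z))
    (m_idem : ∀ x : S, m x x = x) (j_idem : ∀ x : S, j x x = x)
    (abs₁ : ∀ x y : S, j (m y x) x = x)
    (abs₂ : ∀ x y : S, m x (j x y) = x)
    (abs₃ : ∀ x y : S, j x (m x y) = x)
    (abs₄ : ∀ x y : S, m (j y x) x = x)
    (norm : ∀ x y z : S, m (m (m z x) y) z = m (m (m z y) x) z) :
    (∀ x y z : S,
      skewD m (m (m z (j x y)) z) (j (m (m z x) z) (m (m z y) z))) ↔
    (∀ x y z : S, m (m z (j x y)) z = j (m (m z x) z) (m (m z y) z)) := by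
  constructor
  · intro h x y z
    obtain ⟨h1, h2⟩ := h x y z
    have hza : m z (m (m z (j x y)) z) = m (m z (j x y)) z := by
      rw [← m_assoc, ← m_assoc, m_idem]
    have haz : m (m (m z (j x y)) z) z = m (m z (j x y)) z := by
      rw [m_assoc, m_idem]
    have hr : ∀ w, j (m (m z w) z) z = z := fun w => abs₁ z _
    have hl : ∀ w, j z (m (m z w) z) = z := fun w => by rw [m_assoc, abs₃]
    have hbz : m (j (m (m z x) z) (m (m z y) z)) z = j (m (m z x) z) (m (m z y) z) := by
      have e : j (j (m (m z x) z) (m (m z y) z)) z = z := by rw [j_assoc, hr, hr]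
      have := abs₂ (j (m (m z x) z) (m (m z y) z)) z
      rwa [e] at this
    have hzb : m z (j (m (m z x) z) (m (m z y) z)) = j (m (m z x) z) (m (m z y) z) := by
      have e : j z (j (m (m z x) z) (m (m z y) z)) = z := by rw [← j_assoc, hl, hl]
      have := abs₄ (j (m (m z x) z) (m (m z y) z)) z
      rwa [e] at this
    generalize m (m z (j x y)) z = a at *
    generalize j (m (m z x) z) (m (m z y) z) = b at *
    have hc : m a b = m b a := by
      have := norm a b z
      rwa [hza, hzb, m_assoc, hbz, m_assoc, haz] at this
    calc a = m (m a b) a := h1.symm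
      _ = m b a := by rw [hc, m_assoc, m_idem]
      _ = m (m b a) b := by rw [← hc, m_assoc, m_idem]
      _ = b := h2
  · intro h x y z
    rw [h x y z]
    exact ⟨by rw [m_idem, m_idem], by rw [m_idem, m_idem]⟩
end

section
/- A normal skew lattice (S, ∧, ∨) is symmetric if and only if the identities (x∧y)∨x = x∧(y∨x) and (x∨y)∧x = x∨(y∧x) hold for all x, y ∈ S. -/
/-- First identity, for symmetric normal skew lattices. -/
theorem skew_first_identity {S : Type*} (m j : S → S → S)
    (m_assoc : ∀ x y z : S, m (m x y) z = m x (m y z))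
    (j_assoc : ∀ x y z : S, j (j x y) z = j x (j y z))
    (m_idem : ∀ x : S, m x x = x) (j_idem : ∀ x : S, j x x = x)
    (abs₁ : ∀ x y : S, j (m y x) x = x)
    (abs₂ : ∀ x y : S, m x (j x y) = x)
    (abs₃ : ∀ x y : S, j x (m x y) = x)
    (abs₄ : ∀ x y : S, m (j y x) x = x)
    (norm : ∀ x y z : S, m z (m x (m y z)) = m z (m y (m x z)))
    (sym : ∀ x y : S, m x y = m y x → j x y = j y x) (x y : S) :
    j (m x y) x = m x (j y x) := by
  have mi : ∀ a b, m a (m a b) = m a b := fun a b => by rw [← m_assoc, m_idem]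
  have ji : ∀ a b, j a (j a b) = j a b := fun a b => by rw [← j_assoc, j_idem]
  have mi2 : ∀ a b, m a (m b (m a b)) = m a b := fun a b => by rw [← m_assoc, m_idem]
  have ji2 : ∀ a b, j a (j b (j a b)) = j a b := fun a b => by rw [← j_assoc, j_idem]
  obtain ⟨c, hc⟩ : ∃ c, c = m x y := ⟨_, rfl⟩
  obtain ⟨z, hz⟩ : ∃ z, z = m y (m x y) := ⟨_, rfl⟩
  obtain ⟨w, hw⟩ : ∃ w, w = m x (m y x) := ⟨_, rfl⟩
  -- joins inside the class of `x ∧ y`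
  have zc : j z c = c := by rw [hz, hc]; exact abs₁ _ _
  have cz : j c z = z := by
    have : c = m x z := by rw [hz, hc, mi2]
    rw [this]; exact abs₁ _ _
  have cw : j c w = c := by
    have : w = m c x := by rw [hw, hc, m_assoc]
    rw [this]; exact abs₃ _ _
  have wc : j w c = w := by
    have : c = m w y := by rw [hw, hc, m_assoc, m_assoc, mi2]
    rw [this]; exact abs₃ _ _
  have wzw : j w (j z w) = w := by
    have h1 : j w (j z c) = w := by rw [zc, wc]
    calc j w (j z w) = j w (j z (j w (j z c))) := by rw [h1]
      _ = j (j w z) (j (j w z) c) := by simp only [j_assoc]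
      _ = w := by rw [ji, j_assoc, h1]
  have zw : j z w = c := by
    calc j z w = j c (j z w) := by rw [← j_assoc, cz]
      _ = j (j c w) (j z w) := by rw [cw]
      _ = c := by rw [j_assoc, wzw, cw]
  have wx : j w x = x := by
    have : w = m (m x y) x := by rw [hw, m_assoc]
    rw [this]; exact abs₁ _ _
  have zx : j z x = j c x := by
    calc j z x = j z (j w x) := by rw [wx]
      _ = j c x := by rw [← j_assoc, zw]
  obtain ⟨u, hu⟩ : ∃ u, u = j c x := ⟨_, rfl⟩
  have xc : j x c = x := by rw [hc]; exact abs₃ _ _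
  have xu : j x u = x := by rw [hu, ← j_assoc, xc, j_idem]
  have mxu : m x u = u := by have := abs₄ u x; rwa [xu] at this
  have mux : m u x = x := by rw [hu]; exact abs₄ _ _
  obtain ⟨p, hp⟩ : ∃ p, p = j z (j x z) := ⟨_, rfl⟩
  have hpu : p = j u z := by rw [hp, ← j_assoc, zx, hu]
  have pu : j p u = u := by
    rw [hp, hu, ← zx, j_assoc, j_assoc, ji, ji2]
  have mpu : m p u = p := by have := abs₂ p u; rwa [pu] at this
  have pxu : m (m p x) u = p := by rw [m_assoc, mxu, mpu]
  have pxp : m p (m x p) = p := by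
    calc m p (m x p) = m (m p x) (m (m p x) u) := by rw [pxu, m_assoc]
      _ = p := by rw [mi, pxu]
  have mpz : m p z = z := by rw [hpu]; exact abs₄ _ _
  have mzp : m z p = z := by rw [hp]; exact abs₂ _ _
  have myz : m y z = z := by rw [hz, mi]
  have mzy : m z y = z := by rw [hz, m_assoc, m_assoc, m_idem]
  have ypy : m y (m p y) = z := by
    have e1 : m y (m p y) = m y (m x (m p y)) := by
      calc m y (m p y) = m y (m p (m (m x p) y)) := by
            conv_lhs => rw [← pxp]
            simp only [m_assoc]
        _ = m y (m (m x p) (m p y)) := norm _ _ _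
        _ = m y (m x (m p y)) := by rw [m_assoc, mi]
    have e2 : m y (m (m p y) (m x y)) = m y (m x (m (m p y) y)) := norm _ _ _
    rw [m_assoc p y y, m_idem] at e2
    rw [e1, ← e2, m_assoc, ← hz, mpz, myz]
  have py : m p y = z := by
    calc m p y = m p (m y (m p y)) := (mi2 p y).symm
      _ = z := by rw [ypy, mpz]
  have yp : m y p = z := by
    calc m y p = m (m y (m p y)) p := by rw [m_assoc, m_assoc, mi2]
      _ = z := by rw [ypy, mzp]
  have K := sym p y (by rw [py, yp])
  have zy : j z y = y := by
    have : z = m (m y x) y := by rw [hz, m_assoc]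
    rw [this]; exact abs₁ _ _
  have yz : j y z = y := by rw [hz]; exact abs₃ _ _
  have K' : j z (j x y) = j y (j x z) := by
    rw [hp, j_assoc, j_assoc, zy, ← j_assoc y z, yz] at K
    exact K
  obtain ⟨t, ht⟩ : ∃ t, t = j y x := ⟨_, rfl⟩
  have ut : j u t = t := by
    calc j u t = j (j z (j x y)) x := by rw [hu, ← zx, ht]; simp only [j_assoc]
      _ = j y (j x (j z x)) := by rw [K']; simp only [j_assoc]
      _ = t := by rw [zx, ← hu, xu, ht]
  have hmut : m u t = u := by have := abs₂ u t; rwa [ut] at this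
  have mtx : m t x = x := by rw [ht]; exact abs₄ _ _
  have tt : m t (m u t) = m t (m x t) := by
    have e := norm x u t
    rw [← m_assoc x u, mxu, ← m_assoc u x, mux] at e
    exact e
  rw [← hc, ← hu, ← ht]
  calc u = m x u := mxu.symm
    _ = m x (m t u) := by
      conv_rhs => rw [← mxu, ← m_assoc t, mtx]
      rw [mi]
    _ = m x (m t (m u t)) := by rw [hmut]
    _ = m x t := by rw [tt, ← m_assoc t, mtx, mi]


/-- A normal skew lattice is symmetric iff the identities
`(x∧y)∨x = x∧(y∨x)` and `(x∨y)∧x = x∨(y∧x)` hold. -/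
theorem normal_skew_lattice_symmetric_iff {S : Type*} (m j : S → S → S)
    (m_assoc : ∀ x y z : S, m (m x y) z = m x (m y z))
    (j_assoc : ∀ x y z : S, j (j x y) z = j x (j y z))
    (m_idem : ∀ x : S, m x x = x) (j_idem : ∀ x : S, j x x = x)
    (abs₁ : ∀ x y : S, j (m y x) x = x)
    (abs₂ : ∀ x y : S, m x (j x y) = x)
    (abs₃ : ∀ x y : S, j x (m x y) = x)
    (abs₄ : ∀ x y : S, m (j y x) x = x)
    (norm : ∀ x y z : S, m (m (m z x) y) z = m (m (m z y) x) z) :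
    (∀ x y : S, m x y = m y x ↔ j x y = j y x) ↔
    (∀ x y : S, j (m x y) x = m x (j y x) ∧ m (j x y) x = j x (m y x)) := by
  constructor
  · intro sym x y
    refine ⟨skew_first_identity m j m_assoc j_assoc m_idem j_idem abs₁ abs₂ abs₃ abs₄
      (fun x y z => by simpa only [m_assoc] using norm x y z) (fun x y => (sym x y).1) x y, ?_⟩
    exact (skew_first_identity (fun a b => m b a) (fun a b => j b a)
      (fun x y z => (m_assoc z y x).symm) (fun x y z => (j_assoc z y x).symm) m_idem j_idem
      abs₃ abs₄ abs₁ abs₂ (fun x y z => norm y x z)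
      (fun x y h => ((sym x y).1 h.symm).symm) x y).symm
  · intro H x y
    constructor
    · intro h
      have h1 := (H x y).1
      rw [h, abs₁] at h1
      have h2 := (H x y).2
      rw [← h, abs₃] at h2
      have e1 := abs₁ (j y x) x
      rw [← h1, ← j_assoc] at e1
      have e2 := abs₃ (j x y) x
      rw [h2] at e2
      rw [← e1, e2]
    · intro h
      have h1 := (H x y).1
      rw [← h, abs₂] at h1
      have h2 := (H x y).2
      rw [h, abs₄] at h2
      have e1 := abs₂ (m x y) x
      rw [h1] at e1
      have e2 := abs₄ (m y x) x
      rw [← h2] at e2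
      rw [← e1, m_assoc, e2]
end

section
/- A normal skew lattice (S, ∧, ∨) is symmetric and has a distributive lattice reflection S/D — the latter equivalently expressed as: for all x, y, z ∈ S, z∧(x∨y)∧z D (z∧x∧z)∨(z∧y∧z) — if and only if the two identities x∧(y∨z) = (x∧y)∨(x∧z) and (x∨y)∧z = (x∧z)∨(y∧z) hold for all x, y, z ∈ S. -/
class NSkew (S : Type*) extends Mul S, Add S where
  ma : ∀ x y z : S, x * y * z = x * (y * z)
  ja : ∀ x y z : S, x + y + z = x + (y + z)
  mi : ∀ x : S, x * x = x
  ji : ∀ x : S, x + x = x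
  a1 : ∀ x y : S, y * x + x = x
  a2 : ∀ x y : S, x * (x + y) = x
  a3 : ∀ x y : S, x + x * y = x
  a4 : ∀ x y : S, (y + x) * x = x
  nm : ∀ x y z : S, z * x * y * z = z * y * x * z

namespace NSkew
variable {S : Type*} [NSkew S]

theorem mi' (x y : S) : x * (x * y) = x * y := by rw [← ma, mi]
theorem ji' (x y : S) : x + (x + y) = x + y := by rw [← ja, ji]

theorem L1 {p q : S} (h : p * q = p) : p + q = q := by
  have := a1 q p; rwa [h] at this
theorem L2 {p q : S} (h : p + q = q) : p * q = p := by
  have := a2 p q; rwa [h] at this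
theorem R1 {p q : S} (h : q * p = p) : q + p = q := by
  have := a3 q p; rwa [h] at this
theorem R2 {p q : S} (h : q + p = q) : q * p = p := by
  have := a4 p q; rwa [h] at this

theorem Ltrans {p q r : S} (h : p * q = p) (h' : q * r = q) : p * r = p := by
  rw [← h, ma, h']

theorem D1 {k p : S} (h : k * p * k = k) : p + k + p = p := by
  have h1 : k + p * k = p * k := L1 (by rw [← ma, h])
  have h2 : p + (k + p * k) = p := by rw [h1, a3]
  have h3 : p + k + p = (p + k) + (p + k) + p * k := by
    conv_lhs => rw [← h2]
    grind [ja, ji, ji']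
  rw [h3, ji, ja, h2]

theorem D2 {k p : S} (h : p + k + p = p) : k * p * k = k := by
  have h1 : p * (k + p) = k + p := R2 (by rw [← ja, h])
  have h2 : k * (p * (k + p)) = k := by rw [h1, a2]
  have h3 : k * p * k = (k * p) * (k * p) * (k + p) := by
    rw [ma (k * p) (k * p), ma k p (k + p), h2]
  rw [h3, mi, ma, h2]

theorem nmA (a x y b : S) : a * x * y * b * a = a * y * x * b * a := by
  have e : ∀ x y : S, a * x * a * y * a = a * x * y * a := by
    intro x y
    rw [ma a x a, nm (x * a) y a, ← ma, ma _ a a, mi, nm]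
  calc a * x * y * b * a = a * (x * y) * a * b * a := by rw [e]; simp only [ma]
    _ = a * (y * x) * a * b * a := by
      rw [← ma a x y, nm x y a, ma a y x]
    _ = _ := by rw [e]; simp only [ma]

theorem nmB (a x y b : S) : b * a * x * y * b = b * a * y * x * b := by
  have e : ∀ x y : S, b * x * b * y * b = b * x * y * b := by
    intro x y
    rw [ma b x b, nm (x * b) y b, ← ma, ma _ b b, mi, nm]
  calc b * a * x * y * b = b * a * b * (x * y) * b := by rw [e]; simp only [ma]
    _ = b * a * (b * x * y * b) := by simp only [ma]
    _ = b * a * (b * y * x * b) := by rw [nm]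
    _ = b * a * b * (y * x) * b := by simp only [ma]
    _ = _ := by rw [e]; simp only [ma]

theorem sw (a x y b : S) : a * (x * (y * b)) = a * (y * (x * b)) := by
  calc a * (x * (y * b)) = (a * x * y * b * a) * x * y * b := by
        rw [← mi (a * (x * (y * b)))]; simp only [ma]
    _ = (a * y * x * b * a) * x * y * b := by rw [nmA]
    _ = a * y * x * (b * a * x * y * b) := by simp only [ma]
    _ = a * y * x * (b * a * y * x * b) := by rw [nmB]
    _ = (a * y * x * b) * (a * y * x * b) := by simp only [ma]
    _ = _ := by rw [mi]; simp only [ma]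

theorem ab1 (y x b : S) : y * (x * (y * b)) = y * (x * b) := by rw [sw, mi']
theorem ab2 (x z y b : S) : x * (z * (y * (x * b))) = x * (z * (y * b)) := by
  rw [sw z y x b, ab1]

/-- Two elements with a common lower bound in the meet class commute. -/
theorem comm_aux (c d : S) :
    (d * c * d + c + d * c * d) * d = d * c * d ∧ d * (d * c * d + c + d * c * d) = d * c * d := by
  obtain ⟨k, hk⟩ : ∃ k, k = d * c * d := ⟨_, rfl⟩
  rw [← hk]
  obtain ⟨e, he⟩ : ∃ e, e = k + c + k := ⟨_, rfl⟩
  rw [← he]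
  have hkd : k * d = k := by rw [hk]; simp only [ma, mi]
  have hdk : d * k = k := by rw [hk]; simp only [ma, mi']
  have hkc : k * c * k = k := by
    have := mi (d * c); have := mi (c * d)
    calc k * c * k = (d * c) * (d * c) * (d * c) * d := by rw [hk]; simp only [ma]
      _ = k := by rw [mi, mi, hk]
  have h1 := D1 hkc
  have hek : e + k = e := by rw [he, ja, ji]
  have hke : k + e = e := by rw [he, ja, ji']
  have h2 : k * e = k := L2 hke
  have h3 : e * k = k := R2 hek
  have hec : c + e + c = c := by
    calc c + e + c = (c + k + c) + k + c := by rw [he]; simp only [ja]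
      _ = c := by rw [h1, h1]
  have h4 := D2 hec
  have h5 : e * d * e = k := by
    calc e * d * e = (e * c * e) * d * e := by rw [h4]
      _ = e * (c * (e * (d * e))) := by simp only [ma]
      _ = e * (e * (c * (d * e))) := by rw [sw]
      _ = e * (c * (d * (d * e))) := by rw [mi', mi']
      _ = e * (d * (c * (d * e))) := by rw [sw]
      _ = e * k * e := by rw [hk]; simp only [ma]
      _ = k := by rw [h3, h2]
  constructor
  · calc e * d = (e * d * e) * d := by rw [ma (e * d), mi]
      _ = k := by rw [h5, hkd]
  · calc d * e = d * (e * d * e) := by rw [ma e d e, ← ma d e (d * e), mi]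
      _ = k := by rw [h5, hdk]

theorem cong {a b : S} (c : S) (h1 : a + b = b) (h2 : b + a = a) :
    (a + c) + (b + c) = b + c := by
  obtain ⟨κ, hκ⟩ : ∃ κ, κ = c + b := ⟨_, rfl⟩
  obtain ⟨t, ht⟩ : ∃ t, t = b * κ := ⟨_, rfl⟩
  have hκb : κ + b = κ := by rw [hκ, ja, ji]
  have h3 : κ * b = b := R2 hκb
  have hbt : b + t = b := by rw [ht, a3]
  have htb : t + b = t := R1 (by rw [ht, ma, h3, mi])
  have htκ : t + κ = κ := by rw [ht, a1]
  have h4 : t + a + t = t := by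
    have : (t + a) + b = t := by rw [ja, h1, htb]
    calc t + a + t = (t + a) + ((t + a) + b) := by rw [this]
      _ = t := by rw [ji', this]
  have h5 : a + t = b := by
    calc a + t = b + a + t := by rw [h2]
      _ = (b + t) + a + t := by rw [hbt]
      _ = b + (t + a + t) := by simp only [ja]
      _ = b := by rw [h4, hbt]
  have h6 : a + κ = b + κ := by
    calc a + κ = (a + t) + κ := by rw [ja, htκ]
      _ = b + κ := by rw [h5]
  calc (a + c) + (b + c) = (a + κ) + c := by rw [hκ]; simp only [ja]
    _ = (b + c) + (b + c) := by rw [h6, hκ]; simp only [ja]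
    _ = _ := ji _

theorem Djoin {u p q : S} (hp : u + p + u = u) (hq : u + q + u = u) : u + (p + q) + u = u := by
  have h := ji (q + u + p)
  calc u + (p + q) + u = (u + q + u) + (p + q) + (u + p + u) := by rw [hp, hq]
    _ = u + ((q + u + p) + (q + u + p)) + u := by simp only [ja]
    _ = (u + q + u) + p + u := by rw [h]; simp only [ja]
    _ = u := by rw [hq, hp]

theorem uw (sym : ∀ x y : S, x * y = y * x → x + y = y + x) (x y z : S) :
    (x * y + x * z) * (y + z) = x * y + x * z := by
  obtain ⟨b, hb⟩ : ∃ b, b = x * z := ⟨_, rfl⟩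
  obtain ⟨a, ha⟩ : ∃ a, a = y * x * y := ⟨_, rfl⟩
  obtain ⟨l, hl⟩ : ∃ l, l = a * b * a := ⟨_, rfl⟩
  obtain ⟨e, he⟩ : ∃ e, e = l + b + l := ⟨_, rfl⟩
  obtain ⟨k, hk⟩ : ∃ k, k = y * z * y := ⟨_, rfl⟩
  obtain ⟨t, ht⟩ : ∃ t, t = k + z + k := ⟨_, rfl⟩
  have xyxy : x * (y * (x * y)) = x * y := by rw [← ma, mi]
  have e1 : x * y + a = a := L1 (by rw [ha]; simp only [ma, mi']; exact xyxy)
  have e2 : a + x * y = x * y := L1 (by rw [ha]; simp only [ma]; rw [xyxy])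
  have e3 : (x * y + b) * (a + b) = x * y + b := L2 (cong b e1 e2)
  have e4 : e + a = a + e := by
    have := comm_aux b a
    rw [← hl, ← he] at this
    exact sym _ _ (this.1.trans this.2.symm)
  have e5 : a + e = a + b + l := by
    have : a + l = a := by rw [hl, ma, a3]
    rw [he, ← ja, ← ja, this]
  have e6 : (x * y + b) * (a + e) = x * y + b := Ltrans e3 (by rw [e5, a2])
  have e7 : y + t = t + y := by
    have := comm_aux z y
    rw [← hk, ← ht] at this
    exact sym _ _ (this.2.trans this.1.symm)
  have e8 : y + t = y + z + k := by
    have : y + k = y := by rw [hk, ma, a3]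
    rw [ht, ← ja, ← ja, this]
  have e9 : (y + t) * (y + z) = y + t := by
    apply L2
    rw [e8]
    apply D1
    have : y * (y + z) = y := a2 _ _
    calc k * (y + z) * k = (y * z) * (y * (y + z)) * k := by rw [hk]; simp only [ma]
      _ = (y * z) * (y * z) * y := by rw [this, hk]; simp only [ma, mi']
      _ = k := by rw [mi, hk]
  have hbz : b + z = z := L1 (by rw [hb, ma, mi])
  have hlk : l = k * b * k := by
    rw [hl, hk, ha, hb]
    simp only [ma, mi, mi', ab1, ab2]
    rw [sw y z x y]
  have e10 : e + k = k + e := by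
    have := comm_aux b k
    rw [← hlk, ← he] at this
    exact sym _ _ (this.1.trans this.2.symm)
  have hlb : l * b * l = l := by
    rw [hl]
    calc a * b * a * b * (a * b * a) = (a * b) * (a * b) * (a * b) * a := by simp only [ma]
      _ = _ := by rw [mi, mi]
  have e11 : e + (k + z) = k + z := by
    have : k + l = k := by rw [hlk, ma, a3]
    calc e + (k + z) = k + e + z := by rw [← ja, e10]
      _ = (k + l) + b + l + z := by rw [he]; simp only [ja]
      _ = k + b + l + (b + z) := by rw [this, hbz]
      _ = k + (b + l + b) + z := by simp only [ja]
      _ = k + z := by rw [D1 hlb, ja, hbz]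
  have e12 : e * t = e := Ltrans (L2 e11) (by rw [ht, a2])
  have e13 : e + (y + t) = y + t := L1 (Ltrans e12 (by rw [e7, a2]))
  have e14 : a + (y + t) = y + t :=
    L1 (Ltrans (q := y) (by rw [ha, ma, mi]) (a2 _ _))
  rw [← hb]
  exact Ltrans (Ltrans e6 (L2 (by rw [ja, e13, e14]))) e9

theorem half (sym : ∀ x y : S, x * y = y * x → x + y = y + x)
    (hd : ∀ x y z : S, skewD (· * ·) (z * (x + y) * z) (z * x * z + z * y * z)) (x y z : S) :
    x * (y + z) = x * y + x * z := by
  have huw := uw sym x y z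
  obtain ⟨u, hu⟩ : ∃ u, u = x * y + x * z := ⟨_, rfl⟩
  obtain ⟨w, hw⟩ : ∃ w, w = y + z := ⟨_, rfl⟩
  obtain ⟨r, hr⟩ : ∃ r, r = x * y * x + x * z * x := ⟨_, rfl⟩
  obtain ⟨v, hv⟩ : ∃ v, v = x * w := ⟨_, rfl⟩
  have h := (hd y z x).1
  simp only at h
  rw [← hw, ← hr, ← hv] at h
  rw [← hu, ← hw] at huw ⊢
  rw [← hv]
  have hxu : x * u = u := R2 (by rw [hu, ← ja, a3, a3])
  have hvw : v * w = v := by rw [hv, ma, mi]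
  have hxv : x * v = v := by rw [hv, mi']
  have hvrv : v * r * v = v := by
    calc v * r * v = (v * x * r * (v * x)) * w := by
          rw [hv]; simp only [ma, mi, mi', ab1, ab2]
      _ = v := by rw [h, hv]; simp only [ma]; rw [← ma, mi]
  have hru : u + r + u = u := by
    rw [hr]
    apply Djoin
    · apply D1
      have : x * y * u = x * y := by rw [hu, a2]
      calc x * y * x * u * (x * y * x) = x * y * (x * u) * (x * y * x) := by simp only [ma]
        _ = (x * y) * (x * y) * x := by rw [hxu, this]; simp only [ma]
        _ = _ := by rw [mi]
    · have : x * z + x * z * x = x * z := a3 _ _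
      have : u + x * z * x = u := by rw [hu, ja, this]
      rw [this, ji]
  have hrur := D2 hru
  have hvuv : v * u * v = v := by
    have e1 : v * r * u * v = v := by
      calc v * r * u * v = v * (r * (u * v)) := by simp only [ma]
        _ = v * (r * (r * (u * v))) := by rw [mi']
        _ = v * (r * (u * (r * v))) := by rw [sw r r u v]
        _ = v * (r * u * r) * v := by simp only [ma]
        _ = v := by rw [hrur, hvrv]
    calc v * u * v = (v * r * v) * u * v := by rw [hvrv]
      _ = v * (r * (v * (u * v))) := by simp only [ma]
      _ = v * (v * (r * (u * v))) := by rw [sw]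
      _ = v * r * u * v := by rw [mi']; simp only [ma]
      _ = v := e1
  have huvu : u * v * u = u := by
    calc u * v * u = u * (x * (w * u)) := by rw [hv]; simp only [ma]
      _ = u * (w * (x * u)) := by rw [sw]
      _ = u := by rw [hxu, ← ma, huw, mi]
  calc v = x * (v * u * v) * w := by rw [hvuv, hxv, hvw]
    _ = x * (v * (u * (v * w))) := by simp only [ma]
    _ = x * (u * (v * w)) := by rw [sw x v u, mi']
    _ = x * (u * (u * (v * w))) := by rw [mi']
    _ = x * (u * v * u) * w := by rw [sw u u v w]; simp only [ma]
    _ = u := by rw [huvu, hxu, huw]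

end NSkew

/-- A normal skew lattice is symmetric with distributive lattice
reflection iff the two distributivity identities `x∧(y∨z) = (x∧y)∨(x∧z)` and
`(x∨y)∧z = (x∧z)∨(y∧z)` hold. -/
theorem normal_skew_lattice_distributive_iff {S : Type*} (m j : S → S → S)
    (m_assoc : ∀ x y z : S, m (m x y) z = m x (m y z))
    (j_assoc : ∀ x y z : S, j (j x y) z = j x (j y z))
    (m_idem : ∀ x : S, m x x = x) (j_idem : ∀ x : S, j x x = x)
    (abs₁ : ∀ x y : S, j (m y x) x = x)
    (abs₂ : ∀ x y : S, m x (j x y) = x)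
    (abs₃ : ∀ x y : S, j x (m x y) = x)
    (abs₄ : ∀ x y : S, m (j y x) x = x)
    (norm : ∀ x y z : S, m (m (m z x) y) z = m (m (m z y) x) z) :
    ((∀ x y : S, m x y = m y x ↔ j x y = j y x) ∧
     (∀ x y z : S,
       skewD m (m (m z (j x y)) z) (j (m (m z x) z) (m (m z y) z)))) ↔
    (∀ x y z : S, m x (j y z) = j (m x y) (m x z) ∧ m (j x y) z = j (m x z) (m y z)) := by
  constructor
  · rintro ⟨hs, hd⟩ x y z
    constructor
    · letI : NSkew S :=
        { mul := m, add := j, ma := m_assoc, ja := j_assoc, mi := m_idem, ji := j_idem,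
          a1 := abs₁, a2 := abs₂, a3 := abs₃, a4 := abs₄, nm := norm }
      exact NSkew.half (S := S) (fun x y => (hs x y).1) hd x y z
    · letI : NSkew S :=
        { mul := fun a b => m b a, add := fun a b => j b a
          ma := fun x y z => (m_assoc z y x).symm
          ja := fun x y z => (j_assoc z y x).symm
          mi := m_idem, ji := j_idem,
          a1 := abs₃, a2 := abs₄, a3 := abs₁, a4 := abs₂
          nm := fun x y z => by
            change m z (m y (m x z)) = m z (m x (m y z))
            simpa only [m_assoc] using norm y x z }
      refine NSkew.half (S := S) (fun x y h => ((hs y x).1 h)) ?_ z y x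
      intro x y z
      have h := hd y x z
      change skewD (fun a b => m b a) (m z (m (j y x) z)) (j (m z (m y z)) (m z (m x z)))
      simp only [skewD, m_assoc] at h ⊢
      exact h
  · intro h
    refine ⟨fun x y => ⟨fun e => ?_, fun e => ?_⟩, fun x y z => ?_⟩
    · have e1 : m (j x y) (j y x) = j x y := by
        rw [(h x y (j y x)).2, abs₂ y x, (h x y x).1, e, m_idem, abs₁]
      have e2 : m (j x y) (j y x) = j y x := by
        rw [(h (j x y) y x).1, abs₄ y x, (h x y x).2, m_idem, ← e, abs₃]
      exact e1.symm.trans e2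
    · have n := norm x y (j x y)
      have h1 : m (j x y) x = x := by rw [e, abs₄]
      have h2 : m x (j x y) = x := abs₂ x y
      have h3 : m (j x y) y = y := abs₄ y x
      have h4 : m y (j x y) = y := by rw [e, abs₂]
      rw [h1, h3, m_assoc, h4, m_assoc, h2] at n
      exact n
    · have e : m (m z (j x y)) z = j (m (m z x) z) (m (m z y) z) := by
        rw [(h z x y).1, (h _ _ z).2]
      rw [e]
      simp only [skewD, m_idem, and_self]
end

section
/- Let (S, ∧, ∨) be a right-handed normal skew lattice satisfying the distributivity identities x∧(y∨z) = (x∧y)∨(x∧z) and (x∨y)∧z = (x∧z)∨(y∧z) for all x, y, z (i.e., a right-handed distributive skew lattice). Suppose a ∈ S is a global element, meaning x∧a∧x = x for all x ∈ S, and that a is the unique such element (every b ∈ S with x∧b∧x = x for all x satisfies b = a). Then S is commutative: x∧y = y∧x and x∨y = y∨x for all x, y ∈ S. -/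
/-- A right-handed normal skew lattice satisfying the two
distributivity identities (i.e. a right-handed distributive skew lattice) which
has a unique global element is commutative. -/
theorem right_distributive_skew_lattice_unique_global_commutative
    {S : Type*} (m j : S → S → S)
    (m_assoc : ∀ x y z : S, m (m x y) z = m x (m y z))
    (j_assoc : ∀ x y z : S, j (j x y) z = j x (j y z))
    (m_idem : ∀ x : S, m x x = x) (j_idem : ∀ x : S, j x x = x)
    (abs₁ : ∀ x y : S, j (m y x) x = x)
    (abs₂ : ∀ x y : S, m x (j x y) = x)
    (abs₃ : ∀ x y : S, j x (m x y) = x)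
    (abs₄ : ∀ x y : S, m (j y x) x = x)
    (norm : ∀ x y z : S, m (m (m z x) y) z = m (m (m z y) x) z)
    (rh : ∀ x y : S, m (m x y) x = m y x)
    (distrib₁ : ∀ x y z : S, m x (j y z) = j (m x y) (m x z))
    (distrib₂ : ∀ x y z : S, m (j x y) z = j (m x z) (m y z))
    (a : S) (ha : ∀ x : S, m (m x a) x = x)
    (ha_unique : ∀ b : S, (∀ x : S, m (m x b) x = x) → b = a) :
    ∀ x y : S, m x y = m y x ∧ j x y = j y x := by
  have la : ∀ x, m a x = x := fun x => by rw [← rh x a, ha]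
  have lc : ∀ x y z, m x (m y z) = m y (m x z) := by
    intro x y z
    have h := norm x y z
    rw [m_assoc z x y, rh, m_assoc z y x, rh] at h
    rw [← m_assoc, ← m_assoc, h]
  have ja : ∀ x, j x a = a := by
    intro x
    apply ha_unique
    intro z
    rw [rh, distrib₂, la, abs₁]
  have ra : ∀ x, m x a = x := by
    intro x
    have h := abs₂ x a
    rwa [ja] at h
  have mc : ∀ x y, m x y = m y x := by
    intro x y
    have h := lc x y a
    rwa [ra, ra] at h
  have key : ∀ x y, m (j x y) (j y x) = j y x := by
    intro x y
    have h : m (j x y) x = x := by rw [mc, abs₂]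
    rw [distrib₁, abs₄, h]
  intro x y
  exact ⟨mc x y, by rw [← key y x, mc, key x y]⟩
end

section
/- Let (S, ∧, ∨) be a symmetric skew lattice and let x, y ∈ S satisfy x∧y = y∧x. Then x∨y = y∨x and x∨y is the least upper bound of x and y with respect to the natural partial order of the band (S, ∧), i.e. x ≤ x∨y, y ≤ x∨y, and every z with x ≤ z and y ≤ z satisfies x∨y ≤ z, where a ≤ b means a = a∧b = b∧a. (Consequently every distributive skew lattice has an underlying distributive band.) -/
/-- The natural partial order of the meet-band of a skew lattice:
`a ≤ b` iff `a = a∧b = b∧a`. -/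
def skewLe {S : Type*} (m : S → S → S) (a b : S) : Prop :=
  a = m a b ∧ a = m b a

/-- In a symmetric skew lattice, if `x∧y = y∧x` then
`x∨y = y∨x` and `x∨y` is the least upper bound of `x` and `y` with respect to
the natural partial order of the band `(S, ∧)`. -/
theorem symmetric_skew_lattice_commuting_join_is_sup {S : Type*} (m j : S → S → S)
    (m_assoc : ∀ x y z : S, m (m x y) z = m x (m y z))
    (j_assoc : ∀ x y z : S, j (j x y) z = j x (j y z))
    (m_idem : ∀ x : S, m x x = x) (j_idem : ∀ x : S, j x x = x)
    (abs₁ : ∀ x y : S, j (m y x) x = x)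
    (abs₂ : ∀ x y : S, m x (j x y) = x)
    (abs₃ : ∀ x y : S, j x (m x y) = x)
    (abs₄ : ∀ x y : S, m (j y x) x = x)
    (symm : ∀ x y : S, m x y = m y x ↔ j x y = j y x) :
    ∀ x y : S, m x y = m y x →
      j x y = j y x ∧
      skewLe m x (j x y) ∧ skewLe m y (j x y) ∧
      ∀ z : S, skewLe m x z → skewLe m y z → skewLe m (j x y) z := by
  intro x y h
  have hw : j x y = j y x := (symm x y).1 h
  refine ⟨hw, ⟨(abs₂ x y).symm, ?_⟩, ⟨?_, (abs₄ y x).symm⟩, ?_⟩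
  · rw [hw, abs₄]
  · rw [hw, abs₂]
  · rintro z ⟨hx1, hx2⟩ ⟨hy1, hy2⟩
    have hxz : j x z = z := by
      have := abs₁ z x
      rwa [← hx1] at this
    have hyz : j y z = z := by
      have := abs₁ z y
      rwa [← hy1] at this
    have hzx : j z x = z := by
      have := abs₃ z x
      rwa [← hx2] at this
    have hzy : j z y = z := by
      have := abs₃ z y
      rwa [← hy2] at this
    have h1 : j (j x y) z = z := by rw [j_assoc, hyz, hxz]
    have h2 : j z (j x y) = z := by rw [← j_assoc, hzx, hzy]
    constructor
    · have := abs₂ (j x y) z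
      rw [h1] at this
      exact this.symm
    · have := abs₄ (j x y) z
      rw [h2] at this
      exact this.symm
end

section
/- Let X be a spectral space and let C_1, …, C_n be pairwise disjoint constructible subsets of X whose union is X. Then there exists a finite ascending chain ∅ = U_0 ⊆ U_1 ⊆ … ⊆ U_m = X of compact open subsets of X such that for every j ∈ {1, …, m} the difference U_j \ U_{j-1} is contained in C_i for some i; that is, every constructible partition of X can be refined to a chain partition. -/
/-- A subset of a topological space is constructible if it is a finite union of
differences `U \ V` with `U, V` compact open (this generates the Boolean
subalgebra of the powerset generated by the compact open subsets of a spectral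
space). -/
def IsConstructibleSet {X : Type*} [TopologicalSpace X] (C : Set X) : Prop :=
  ∃ (n : ℕ) (U V : Fin n → Set X),
    (∀ i, IsCompact (U i) ∧ IsOpen (U i) ∧ IsCompact (V i) ∧ IsOpen (V i)) ∧
    C = ⋃ i, U i \ V i

theorem chain_deciding
    {X : Type*} [TopologicalSpace X] [CompactSpace X]
    (inter : ∀ U V : Set X,
      IsCompact U → IsOpen U → IsCompact V → IsOpen V → IsCompact (U ∩ V))
    (S : Set (Set X)) (hS : S.Finite) (hco : ∀ W ∈ S, IsCompact W ∧ IsOpen W) :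
    ∃ (m : ℕ) (U : ℕ → Set X),
      U 0 = ∅ ∧ U m = Set.univ ∧
      (∀ k, IsCompact (U k) ∧ IsOpen (U k)) ∧
      (∀ k, U k ⊆ U (k + 1)) ∧
      (∀ k, ∀ W ∈ S, ∀ x ∈ U (k + 1) \ U k, ∀ y ∈ U (k + 1) \ U k, x ∈ W → y ∈ W) := by
  induction S, hS using Set.Finite.induction_on with
  | empty =>
    refine ⟨1, fun k => if k = 0 then ∅ else Set.univ, by simp, by simp, ?_, ?_, by simp⟩
    · intro k
      by_cases h : k = 0
      · simp [h]
      · simp [h, isCompact_univ]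
    · intro k
      simp
  | @insert W S _ _ ih =>
    obtain ⟨m, U, h0, hm, hU, hmono, hdec⟩ := ih fun V hV => hco V (Set.mem_insert_of_mem _ hV)
    have hW := hco W (Set.mem_insert _ _)
    refine ⟨2 * m, fun j => U (j / 2) ∪ (U ((j + 1) / 2) ∩ W), ?_, ?_, ?_, ?_, ?_⟩
    · simp [h0]
    · simp [hm]
    · intro k
      exact ⟨(hU _).1.union (inter _ _ (hU _).1 (hU _).2 hW.1 hW.2),
        (hU _).2.union ((hU _).2.inter hW.2)⟩
    · intro j
      have key : ∀ k, U k ⊆ U (k + 1) := hmono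
      rcases Nat.even_or_odd' j with ⟨k, rfl | rfl⟩
      · have e1 : 2 * k / 2 = k := by omega
        have e2 : (2 * k + 1) / 2 = k := by omega
        have e3 : (2 * k + 1 + 1) / 2 = k + 1 := by omega
        simp only [e1, e2, e3]
        have hk := key k
        intro z hz
        have hz2 := @hk z
        clear * - hz hz2
        simp only [Set.mem_union, Set.mem_inter_iff] at hz ⊢
        tauto
      · have e2 : (2 * k + 1) / 2 = k := by omega
        have e3 : (2 * k + 1 + 1) / 2 = k + 1 := by omega
        have e4 : (2 * k + 1 + 1 + 1) / 2 = k + 1 := by omega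
        simp only [e2, e3, e4]
        have hk := key k
        intro z hz
        have hz2 := @hk z
        clear * - hz hz2
        simp only [Set.mem_union, Set.mem_inter_iff] at hz ⊢
        tauto
    · intro j V hV x hx y hy hxV
      rcases Nat.even_or_odd' j with ⟨k, rfl | rfl⟩
      · have e1 : 2 * k / 2 = k := by omega
        have e2 : (2 * k + 1) / 2 = k := by omega
        have e3 : (2 * k + 1 + 1) / 2 = k + 1 := by omega
        simp only [e1, e2, e3] at hx hy
        have hd := hdec k V
        have hmx := @hmono k x
        have hmy := @hmono k y
        clear * - hx hy hd hmx hmy hV hxV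
        simp only [Set.mem_union, Set.mem_inter_iff, Set.mem_diff] at hx hy hd
        rcases hV with rfl | hV
        · tauto
        · exact hd hV x (by tauto) y (by tauto) hxV
      · have e2 : (2 * k + 1) / 2 = k := by omega
        have e3 : (2 * k + 1 + 1) / 2 = k + 1 := by omega
        have e4 : (2 * k + 1 + 1 + 1) / 2 = k + 1 := by omega
        simp only [e2, e3, e4] at hx hy
        have hd := hdec k V
        have hmx := @hmono k x
        have hmy := @hmono k y
        clear * - hx hy hd hmx hmy hV hxV
        simp only [Set.mem_union, Set.mem_inter_iff, Set.mem_diff] at hx hy hd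
        rcases hV with rfl | hV
        · tauto
        · exact hd hV x (by tauto) y (by tauto) hxV

/-- On a spectral space (compact, `T0`, sober, with the compact
open sets forming a basis closed under finite intersections), every finite
constructible partition can be refined to a chain partition: the family of
successive differences of an ascending chain `∅ = U_0 ⊆ ⋯ ⊆ U_m = X` of compact
open subsets. -/
theorem spectral_constructible_partition_chain_refinement
    {X : Type*} [TopologicalSpace X] [CompactSpace X] [T0Space X] [QuasiSober X]
    (basis : TopologicalSpace.IsTopologicalBasis {U : Set X | IsCompact U ∧ IsOpen U})
    (inter : ∀ U V : Set X,
      IsCompact U → IsOpen U → IsCompact V → IsOpen V → IsCompact (U ∩ V))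
    (n : ℕ) (C : Fin n → Set X)
    (hcons : ∀ i, IsConstructibleSet (C i))
    (hdisj : ∀ i j, i ≠ j → Disjoint (C i) (C j))
    (hcover : ⋃ i, C i = Set.univ) :
    ∃ (m : ℕ) (U : ℕ → Set X),
      U 0 = ∅ ∧ U m = Set.univ ∧
      (∀ k, IsCompact (U k) ∧ IsOpen (U k)) ∧
      (∀ k, U k ⊆ U (k + 1)) ∧
      (∀ k < m, ∃ i, U (k + 1) \ U k ⊆ C i) := by
  choose r A B hAB hC using hcons
  obtain ⟨m, U, h0, hm, hU, hmono, hdec⟩ := chain_deciding inter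
    (⋃ i, (Set.range (A i) ∪ Set.range (B i)))
    (Set.finite_iUnion fun i => (Set.finite_range _).union (Set.finite_range _))
    (by
      intro W hW
      obtain ⟨i, ⟨a, rfl⟩ | ⟨a, rfl⟩⟩ := Set.mem_iUnion.1 hW
      · exact ⟨(hAB i a).1, (hAB i a).2.1⟩
      · exact ⟨(hAB i a).2.2.1, (hAB i a).2.2.2⟩)
  have hx : ∀ x, ∃ i, x ∈ C i := fun x => Set.mem_iUnion.1 (hcover ▸ Set.mem_univ x)
  rcases isEmpty_or_nonempty X with hX | ⟨⟨x0⟩⟩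
  · exact ⟨0, U, h0, Set.eq_univ_of_forall fun x => hX.elim x, hU, hmono, by simp⟩
  refine ⟨m, U, h0, hm, hU, hmono, fun k _ => ?_⟩
  by_cases hne : (U (k + 1) \ U k).Nonempty
  · obtain ⟨x, hxk⟩ := hne
    obtain ⟨i, hi⟩ := hx x
    refine ⟨i, fun y hy => ?_⟩
    rw [hC i] at hi ⊢
    obtain ⟨a, ha, hb⟩ := Set.mem_iUnion.1 hi
    refine Set.mem_iUnion.2 ⟨a, ?_, fun hyb => hb ?_⟩
    · exact hdec k _ (Set.mem_iUnion.2 ⟨i, Or.inl ⟨a, rfl⟩⟩) x hxk y hy ha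
    · exact hdec k _ (Set.mem_iUnion.2 ⟨i, Or.inr ⟨a, rfl⟩⟩) y hy x hxk hyb
  · obtain ⟨i, _⟩ := hx x0
    exact ⟨i, fun y hy => (hne ⟨y, hy⟩).elim⟩
end

section
/- Let X be a Boolean space, i.e. a compact Hausdorff totally disconnected topological space, and let F be a sheaf of sets on X that is globally supported: every point of X has an open neighborhood U with F(U) nonempty (equivalently, every stalk of F is nonempty). Then F has a global section, i.e. F(X) is nonempty. -/
open CategoryTheory TopologicalSpace Opposite

/-- A globally supported sheaf of sets on a Boolean space
(compact Hausdorff totally disconnected space) has a global section: if every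
point has an open neighbourhood over which the sheaf has a section, then the
sheaf has a global section. -/
theorem boolean_space_globally_supported_sheaf_has_global_section
    (X : TopCat) [CompactSpace X] [T2Space X] [TotallyDisconnectedSpace X]
    (F : TopCat.Sheaf (Type*) X)
    (hsupp : ∀ x : X, ∃ U : Opens X, x ∈ U ∧ Nonempty (F.val.obj (op U))) :
    Nonempty (F.val.obj (op ⊤)) := by
  choose U hxU hU using hsupp
  have hcov : IsOpenCover U := by
    refine top_le_iff.mp fun x _ => ?_
    exact Opens.mem_iSup.mpr ⟨x, hxU x⟩
  obtain ⟨n, W, hW, hun, hd⟩ := hcov.exists_finite_nonempty_disjoint_clopen_cover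
  let V : Fin n → Opens X := fun i => (W i).toOpens
  have hsub : ∀ O : Opens X, O = ⊥ → ∀ a b : F.val.obj (op O), a = b := by
    intro O hO
    have h0 : O = iSup (fun e : PEmpty.{1} => (e.elim : Opens X)) := by rw [hO]; exact iSup_of_empty _ |>.symm
    subst h0
    intro a b
    have := TopCat.Presheaf.IsSheaf.isSheafUniqueGluing_types F.property
      (U := fun e : PEmpty.{1} => (e.elim : Opens X)) (fun e => e.elim) (fun e => e.elim)
    exact this.unique (fun e => e.elim) (fun e => e.elim)
  have hne : ∀ i, Nonempty (F.val.obj (op (V i))) := by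
    intro i
    obtain ⟨-, x, hx⟩ := hW i
    have hle : V i ≤ U x := hx
    exact (hU x).map (F.val.map (homOfLE hle).op)
  let s : ∀ i, F.val.obj (op (V i)) := fun i => (hne i).some
  have hc : TopCat.Presheaf.IsCompatible F.val V s := by
    intro i j
    by_cases hij : i = j
    · subst hij; rfl
    · apply hsub
      have h := hd hij
      ext x
      simp only [Opens.coe_inf, Opens.coe_bot, Set.mem_inter_iff, Set.mem_empty_iff_false, iff_false]
      rintro ⟨h1, h2⟩
      have h3 : x ∈ ((W i ⊓ W j : Clopens X) : Set X) := ⟨h1, h2⟩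
      rw [disjoint_iff.mp h] at h3
      exact h3
  obtain ⟨t, -, -⟩ := TopCat.Presheaf.IsSheaf.isSheafUniqueGluing_types F.property s hc
  have htop : iSup V = ⊤ := by
    refine top_le_iff.mp fun x _ => ?_
    obtain ⟨i, hi⟩ := Set.mem_iUnion.mp (hun (Set.mem_univ x))
    exact Opens.mem_iSup.mpr ⟨i, hi⟩
  rw [← htop]
  exact ⟨t⟩
end
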